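/- For every p ∈ (1,∞) there exist constants c1 = c1(p) > 0 and ε0 = ε0(p) > 0 with the following property. Let u, ũ, v : S^1 → S^1 be continuous maps lying in W^{1/p,p}(S^1;S^1), let ε ∈ (0, π/20) with ε ≤ ε0, and assume |u(x) − ũ(x)| ≤ ε for all x ∈ S^1, deg(u) = d1 and deg(v) = d2. Define C_ε^+ := {x ∈ S^1 : v(x)·conjugate(ũ(x)) ∈ A[−ε,ε]}, C_ε^− := {x ∈ S^1 : v(x)·conjugate(ũ(x)) ∈ A[π−ε, π+ε]}, C_ε := C_ε^+ ∪ C_ε^−, and D_ε := S^1×S^1 ∖ ((C_ε^+ × C_ε^+) ∪ (C_ε^− × C_ε^−)). Then E_p(v − ũ; D_ε) ≥ (1 − c1·ε^{1/2})·σ_p^p(d2 − d1) − c1·ε^{−p/2}·E_p(u; (S^1 ∖ C_ε) × S^1) − c1·ε^{p/2}·E_p(u; S^1 × S^1). -/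

import Mathlib

open MeasureTheory Filter
open scoped ENNReal

noncomputable section

/-- Arc-length measure on the unit circle, realized as a measure on ℂ:
the pushforward of Lebesgue measure on `[0, 2π)` under `θ ↦ exp (θ i)`. -/
def circleMeasure : Measure ℂ :=
  Measure.map (fun θ : ℝ => Complex.exp (θ * Complex.I))
    (volume.restrict (Set.Ico 0 (2 * Real.pi)))

/-- The unit circle `S¹ ⊆ ℂ`. -/
def unitCircle : Set ℂ := Metric.sphere (0 : ℂ) 1

/-- Gagliardo `p`-energy of `f` over a subset `A ⊆ S¹ × S¹`. -/
def gEnergyOn (p : ℝ) (f : ℂ → ℂ) (A : Set (ℂ × ℂ)) : ℝ≥0∞ :=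
  ∫⁻ q in A, ENNReal.ofReal (‖f q.1 - f q.2‖ ^ p / ‖q.1 - q.2‖ ^ 2)
    ∂(circleMeasure.prod circleMeasure)

/-- Total Gagliardo `p`-energy `|f|_{W^{1/p,p}}^p` (as an extended real). -/
def gEnergy (p : ℝ) (f : ℂ → ℂ) : ℝ≥0∞ := gEnergyOn p f Set.univ

/-- The Gagliardo seminorm `|f|_{W^{1/p,p}}`. -/
def gSeminorm (p : ℝ) (f : ℂ → ℂ) : ℝ := (gEnergy p f).toReal ^ (1 / p)

/-- A continuous map `g : S¹ → S¹` has (winding) degree `d`: it lifts to a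
continuous `φ : [0, 2π] → ℝ` with `g (e^{iθ}) = e^{iφ(θ)}` and
`φ(2π) - φ(0) = 2πd`. -/
def HasDegree (g : ℂ → ℂ) (d : ℤ) : Prop :=
  ContinuousOn g unitCircle ∧ (∀ z ∈ unitCircle, g z ∈ unitCircle) ∧
    ∃ φ : ℝ → ℝ, ContinuousOn φ (Set.Icc 0 (2 * Real.pi)) ∧
      (∀ θ ∈ Set.Icc 0 (2 * Real.pi),
        g (Complex.exp (θ * Complex.I)) = Complex.exp (φ θ * Complex.I)) ∧
      φ (2 * Real.pi) - φ 0 = 2 * Real.pi * d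

/-- The class `𝓔_d ⊆ W^{1/p,p}(S¹;S¹)` of maps of (VMO-) degree `d`:
maps with values in `S¹` a.e., finite Gagliardo energy, approximable by
continuous degree-`d` circle maps of finite energy both in `L^p` and in the
Gagliardo seminorm. -/
def classE (p : ℝ) (d : ℤ) : Set (ℂ → ℂ) :=
  {f | AEMeasurable f circleMeasure ∧ (∀ᵐ x ∂circleMeasure, ‖f x‖ = 1) ∧
    gEnergy p f ≠ ⊤ ∧
    ∃ g : ℕ → ℂ → ℂ,
      (∀ k, HasDegree (g k) d ∧ gEnergy p (g k) ≠ ⊤) ∧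
      Tendsto (fun k => ∫ x, ‖f x - g k x‖ ^ p ∂circleMeasure) atTop (nhds 0) ∧
      Tendsto (fun k => gSeminorm p (fun x => f x - g k x)) atTop (nhds 0)}

/-- `σ_p(d)`: the minimal `W^{1/p,p}`-seminorm in the class `𝓔_d`. -/
def sigmaP (p : ℝ) (d : ℤ) : ℝ := sInf (gSeminorm p '' classE p d)

/-- `Dist_{W^{1/p,p}}(𝓔_{d₁}, 𝓔_{d₂}) = sup_{f ∈ 𝓔_{d₁}} inf_{g ∈ 𝓔_{d₂}} |f - g|_{W^{1/p,p}}`. -/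
def DistW (p : ℝ) (d1 d2 : ℤ) : ℝ :=
  sSup ((fun f => sInf ((fun g => gSeminorm p (fun x => f x - g x)) '' classE p d2))
    '' classE p d1)

end

/-- The closed arc `A[a,b] = {e^{iθ} : θ ∈ [a,b]}`. -/
def arcIcc (a b : ℝ) : Set ℂ :=
  (fun θ : ℝ => Complex.exp (θ * Complex.I)) '' Set.Icc a b

/-- `C_ε⁺`: points of `S¹` where `v·conj(ũ)` lies in the arc `A[-ε, ε]`. -/
def Cplus (utilde v : ℂ → ℂ) (ε : ℝ) : Set ℂ :=
  {x ∈ unitCircle | v x * (starRingEnd ℂ) (utilde x) ∈ arcIcc (-ε) ε}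

/-- `C_ε⁻`: points of `S¹` where `v·conj(ũ)` lies in the arc `A[π-ε, π+ε]`. -/
def Cminus (utilde v : ℂ → ℂ) (ε : ℝ) : Set ℂ :=
  {x ∈ unitCircle | v x * (starRingEnd ℂ) (utilde x) ∈ arcIcc (Real.pi - ε) (Real.pi + ε)}

/-!
Put `F = v - ũ`. Since `ũ` is `ε`-close to `u`, the map `ū F + 1` is `ε`-close to `ū v`, which
has degree `d₂ - d₁`, and it is within `3ε` of `1` on `C_ε⁺` and of `-1` on `C_ε⁻`.
Soft-thresholding its imaginary part at level `3ε` and projecting radially onto the circle therefore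
gives a map `f` that still has degree `d₂ - d₁` and is *constant* on `C_ε⁺` and on `C_ε⁻`, so that
only `D_ε` contributes to its energy. The two operations are Lipschitz with constants `1` and
`1 + O(ε)`, whence `|f x - f y| ≤ (1 + O(ε)) (|F x - F y| + 2 |u x - u y|)`. The second term is
needed only if `x` or `y` lies off `C_ε`, because on `C_ε⁺ × C_ε⁻` the left side is `2` and
`|F x - F y| ≥ 2 - 2ε`. Splitting the `p`-th power of the sum with weight `√ε` bounds
`σ_p^p(d₂ - d₁) ≤ E_p(f)`.
-/

open scoped ComplexConjugate

/-! ### Elementary inequalities -/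

lemma add_rpow_le_mul_rpow_add_mul_rpow {p a b t : ℝ} (hp : 0 ≤ p) (ha : 0 ≤ a) (hb : 0 ≤ b)
    (ht : 0 < t) : (a + b) ^ p ≤ ((1 + t) * a) ^ p + ((1 + t⁻¹) * b) ^ p := by
  rcases le_total b (t * a) with hba | hab
  · have : (a + b) ^ p ≤ ((1 + t) * a) ^ p := by gcongr; linarith
    exact this.trans (le_add_of_nonneg_right (by positivity))
  · have hab' : a ≤ t⁻¹ * b := by rwa [← div_eq_inv_mul, le_div_iff₀' ht]
    have : (a + b) ^ p ≤ ((1 + t⁻¹) * b) ^ p := by gcongr; linarith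
    exact this.trans (le_add_of_nonneg_left (by positivity))

lemma one_sub_mul_mul_div_rpow_le_one {p c s : ℝ} (hp : 1 ≤ p) (hc : 5 * p ≤ c) (hs0 : 0 ≤ s)
    (hs : s ≤ 1 / 5) : (1 - c * s) * ((1 + s) / (1 - 4 * s ^ 2)) ^ p ≤ 1 := by
  have hden : 0 < 1 - 4 * s ^ 2 := by nlinarith
  have hbernoulli : 1 - c * s ≤ (1 - 5 * s) ^ p := by
    have := one_add_mul_self_le_rpow_one_add (s := -(5 * s)) (by linarith) hp
    rw [← sub_eq_add_neg] at this
    nlinarith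
  calc (1 - c * s) * ((1 + s) / (1 - 4 * s ^ 2)) ^ p
      ≤ (1 - 5 * s) ^ p * ((1 + s) / (1 - 4 * s ^ 2)) ^ p := by gcongr
    _ = ((1 - 5 * s) * (1 + s) / (1 - 4 * s ^ 2)) ^ p := by
      rw [← Real.mul_rpow (by linarith) (by positivity), mul_div_assoc]
    _ ≤ 1 := by
      refine Real.rpow_le_one ?_ ?_ (by linarith)
      · have : 0 ≤ 1 - 5 * s := by linarith
        positivity
      · rw [div_le_one hden]; nlinarith

lemma one_add_inv_mul_four_rpow_le {p ε : ℝ} (hp : 0 ≤ p) (hε : 0 < ε) (hε1 : ε ≤ 1) :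
    ((1 + (ε ^ ((1 : ℝ) / 2))⁻¹) * 4) ^ p ≤ 8 ^ p * ε ^ (-(p / 2)) := by
  have hone : 1 ≤ (ε ^ ((1 : ℝ) / 2))⁻¹ :=
    (one_le_inv₀ (by positivity)).2 (Real.rpow_le_one hε.le hε1 (by norm_num))
  have hpow : ε ^ (-(p / 2)) = ((ε ^ ((1 : ℝ) / 2))⁻¹) ^ p := by
    rw [← Real.rpow_neg hε.le, ← Real.rpow_mul hε.le]; ring_nf
  rw [hpow, ← Real.mul_rpow (by norm_num) (by positivity)]
  exact Real.rpow_le_rpow (by positivity) (by linarith) hp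

lemma ofReal_sub_mul_toReal_sub_le {a b r : ℝ} {X Y : ℝ≥0∞} (hb : 0 ≤ b) (hr : 0 ≤ r) (hY : Y ≠ ⊤)
    (h : ENNReal.ofReal a ≤ X + ENNReal.ofReal b * Y) :
    ENNReal.ofReal (a - b * Y.toReal - r) ≤ X := by
  calc ENNReal.ofReal (a - b * Y.toReal - r)
      ≤ ENNReal.ofReal (a - b * Y.toReal) := ENNReal.ofReal_le_ofReal (by linarith)
    _ = ENNReal.ofReal a - ENNReal.ofReal b * Y := by
      rw [ENNReal.ofReal_sub _ (by positivity), ENNReal.ofReal_mul hb, ENNReal.ofReal_toReal hY]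
    _ ≤ X := tsub_le_iff_right.2 h

lemma ofReal_mul_le_add_ofReal_mul {k a b b' : ℝ} {S X Y : ℝ≥0∞} (ha : 0 ≤ a) (hb : 0 ≤ b)
    (hka : k * a ≤ 1) (hkb : k * b ≤ b') (hS : S ≤ ENNReal.ofReal a * X + ENNReal.ofReal b * Y) :
    ENNReal.ofReal k * S ≤ X + ENNReal.ofReal b' * Y := by
  calc ENNReal.ofReal k * S
      ≤ ENNReal.ofReal k * (ENNReal.ofReal a * X + ENNReal.ofReal b * Y) := by gcongr
    _ = ENNReal.ofReal (k * a) * X + ENNReal.ofReal (k * b) * Y := by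
      rw [mul_add, ← mul_assoc, ← mul_assoc, ENNReal.ofReal_mul' ha, ENNReal.ofReal_mul' hb]
    _ ≤ 1 * X + ENNReal.ofReal b' * Y := by
      gcongr
      exact ENNReal.ofReal_le_one.2 hka
    _ = X + ENNReal.ofReal b' * Y := by rw [one_mul]

/-! ### Radial projection -/

section Normalize

variable {E : Type*}

lemma norm_normalize_sub_self [NormedAddCommGroup E] [NormedSpace ℝ E] {a : E} (ha : a ≠ 0) :
    ‖NormedSpace.normalize a - a‖ = |1 - ‖a‖| := by
  nth_rw 2 [← NormedSpace.norm_smul_normalize a]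
  rw [← one_smul ℝ (NormedSpace.normalize a), smul_smul, ← sub_smul, norm_smul,
    NormedSpace.norm_normalize ha, mul_one, mul_one, Real.norm_eq_abs]

variable [NormedAddCommGroup E] [InnerProductSpace ℝ E]

lemma norm_sub_sq_eq_normalize {a b : E} (ha : a ≠ 0) (hb : b ≠ 0) :
    ‖a - b‖ ^ 2 = (‖a‖ - ‖b‖) ^ 2 +
      ‖a‖ * ‖b‖ * ‖NormedSpace.normalize a - NormedSpace.normalize b‖ ^ 2 := by
  have hinner : inner ℝ a b =
      ‖a‖ * ‖b‖ * inner ℝ (NormedSpace.normalize a) (NormedSpace.normalize b) := by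
    conv_lhs => rw [← NormedSpace.norm_smul_normalize a, ← NormedSpace.norm_smul_normalize b]
    rw [real_inner_smul_left, real_inner_smul_right, mul_assoc]
  rw [norm_sub_sq_real, norm_sub_sq_real, hinner, NormedSpace.norm_normalize ha,
    NormedSpace.norm_normalize hb]
  ring

lemma norm_normalize_sub_normalize_le {a b : E} {r : ℝ} (hr : 0 < r) (ha : r ≤ ‖a‖)
    (hb : r ≤ ‖b‖) : ‖NormedSpace.normalize a - NormedSpace.normalize b‖ ≤ ‖a - b‖ / r := by
  rw [le_div_iff₀ hr, ← sq_le_sq₀ (by positivity) (norm_nonneg _),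
    norm_sub_sq_eq_normalize (norm_pos_iff.1 (hr.trans_le ha)) (norm_pos_iff.1 (hr.trans_le hb))]
  have hprod : r ^ 2 ≤ ‖a‖ * ‖b‖ := by rw [sq]; gcongr
  nlinarith [sq_nonneg (‖a‖ - ‖b‖), mul_le_mul_of_nonneg_right hprod
    (sq_nonneg ‖NormedSpace.normalize a - NormedSpace.normalize b‖)]

end Normalize

/-! ### Soft thresholding -/

/-- Soft thresholding of the imaginary part at level `δ`: subtract from `z.im` its truncation to
`[-δ, δ]`. It collapses the strip `|Im z| ≤ δ` onto the real axis without increasing distances. -/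
def softThresholdIm (δ : ℝ) (z : ℂ) : ℂ := ⟨z.re, z.im - max (-δ) (min δ z.im)⟩

lemma norm_softThresholdIm_sub_le (δ : ℝ) (z w : ℂ) :
    ‖softThresholdIm δ z - softThresholdIm δ w‖ ≤ ‖z - w‖ := by
  have him : |(z.im - max (-δ) (min δ z.im)) - (w.im - max (-δ) (min δ w.im))|
      ≤ |z.im - w.im| := by grind
  rw [Complex.norm_eq_sqrt_sq_add_sq, Complex.norm_eq_sqrt_sq_add_sq]
  simp only [softThresholdIm, Complex.sub_re, Complex.sub_im]
  exact Real.sqrt_le_sqrt (by linarith [sq_le_sq.2 him])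

lemma continuous_softThresholdIm (δ : ℝ) : Continuous (softThresholdIm δ) :=
  (LipschitzWith.of_dist_le' (K := 1) fun z w => by
    simpa [dist_eq_norm] using norm_softThresholdIm_sub_le δ z w).continuous

lemma norm_softThresholdIm_sub_self_le {δ : ℝ} (hδ : 0 ≤ δ) (z : ℂ) :
    ‖softThresholdIm δ z - z‖ ≤ δ := by
  have hdiff : softThresholdIm δ z - z = ((-max (-δ) (min δ z.im) : ℝ) : ℂ) * Complex.I := by
    apply Complex.ext <;> simp [softThresholdIm]
  rw [hdiff, norm_mul, Complex.norm_I, Complex.norm_real, Real.norm_eq_abs, mul_one]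
  grind

lemma softThresholdIm_of_abs_im_le {δ : ℝ} {z : ℂ} (hz : |z.im| ≤ δ) :
    softThresholdIm δ z = z.re := by
  apply Complex.ext
  · simp [softThresholdIm]
  · simp only [softThresholdIm, Complex.ofReal_im]; grind

lemma normalize_softThresholdIm_eq_one {δ : ℝ} {z : ℂ} (hz : ‖z - 1‖ ≤ δ) (hδ : δ < 1) :
    NormedSpace.normalize (softThresholdIm δ z) = 1 := by
  have him : |z.im| ≤ δ := by simpa using (Complex.abs_im_le_norm (z - 1)).trans hz
  have hre : |z.re - 1| ≤ δ := by simpa using (Complex.abs_re_le_norm (z - 1)).trans hz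
  have hpos : 0 < z.re := by linarith [(abs_le.1 hre).1]
  rw [softThresholdIm_of_abs_im_le him, NormedSpace.normalize, Complex.norm_real,
    Real.norm_of_nonneg hpos.le, Complex.real_smul, ← Complex.ofReal_mul, inv_mul_cancel₀ hpos.ne',
    Complex.ofReal_one]

lemma softThresholdIm_neg {δ : ℝ} (hδ : 0 ≤ δ) (z : ℂ) :
    softThresholdIm δ (-z) = -softThresholdIm δ z := by
  apply Complex.ext
  · simp [softThresholdIm]
  · simp only [softThresholdIm, Complex.neg_im]; grind

/-! ### The thresholded quotient -/

/-- For unit numbers `a`, `b`, `c` with `a` close to `b`, an approximation of the quotient `c / a`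
that depends on `b` and `c` only through `c - b`. -/
def approxQuotient (a b c : ℂ) : ℂ := conj a * (c - b) + 1

/-- The approximate quotient of `c` by `a`, moved onto the unit circle in such a way that everything
within `3ε` of `±1` is sent to `±1`. The level `3ε` is dictated by `norm_approxQuotient_add_one_le`,
whose right side is at most `3ε` on the contact set `C_ε⁻`. -/
noncomputable def thresholdedQuotient (ε : ℝ) (a b c : ℂ) : ℂ :=
  NormedSpace.normalize (softThresholdIm (3 * ε) (approxQuotient a b c))

lemma conj_mul_self_of_norm_eq_one {a : ℂ} (ha : ‖a‖ = 1) : conj a * a = 1 := by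
  simp [Complex.conj_mul', ha]

section Quotient

variable {ε : ℝ} {a b c : ℂ}

lemma norm_approxQuotient_sub (ha : ‖a‖ = 1) :
    ‖approxQuotient a b c - conj a * c‖ = ‖a - b‖ := by
  have hdiff : approxQuotient a b c - conj a * c = conj a * (a - b) := by
    unfold approxQuotient; linear_combination -conj_mul_self_of_norm_eq_one ha
  rw [hdiff, norm_mul, RCLike.norm_conj, ha, one_mul]

lemma norm_approxQuotient_sub_one (ha : ‖a‖ = 1) : ‖approxQuotient a b c - 1‖ = ‖c - b‖ := by
  rw [approxQuotient, add_sub_cancel_right, norm_mul, RCLike.norm_conj, ha, one_mul]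

lemma norm_approxQuotient_add_one_le (ha : ‖a‖ = 1) :
    ‖approxQuotient a b c + 1‖ ≤ ‖c + b‖ + 2 * ‖a - b‖ := by
  have hsum : approxQuotient a b c + 1 = conj a * ((c + b) + 2 * (a - b)) := by
    unfold approxQuotient; linear_combination -2 * conj_mul_self_of_norm_eq_one ha
  rw [hsum, norm_mul, RCLike.norm_conj, ha, one_mul]
  exact (norm_add_le _ _).trans_eq (by rw [norm_mul, Complex.norm_two])

lemma norm_approxQuotient_sub_le {a' b' c' : ℂ} (ha : ‖a‖ = 1) (hb' : ‖b'‖ = 1)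
    (hc' : ‖c'‖ = 1) : ‖approxQuotient a b c - approxQuotient a' b' c'‖ ≤
      ‖(c - b) - (c' - b')‖ + 2 * ‖a - a'‖ := by
  have hdiff : approxQuotient a b c - approxQuotient a' b' c' =
      conj a * ((c - b) - (c' - b')) + conj (a - a') * (c' - b') := by
    simp only [approxQuotient, map_sub]; ring
  have hF : ‖c' - b'‖ ≤ 2 := (norm_sub_le _ _).trans (by rw [hc', hb']; norm_num)
  calc ‖approxQuotient a b c - approxQuotient a' b' c'‖
      ≤ ‖conj a * ((c - b) - (c' - b'))‖ + ‖conj (a - a') * (c' - b')‖ :=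
        hdiff ▸ norm_add_le _ _
    _ = ‖(c - b) - (c' - b')‖ + ‖c' - b'‖ * ‖a - a'‖ := by
      rw [norm_mul, norm_mul, RCLike.norm_conj, RCLike.norm_conj, ha, one_mul, mul_comm ‖a - a'‖]
    _ ≤ ‖(c - b) - (c' - b')‖ + 2 * ‖a - a'‖ := by gcongr

lemma norm_softThresholdIm_approxQuotient_sub_le (ha : ‖a‖ = 1) (hab : ‖a - b‖ ≤ ε) :
    ‖softThresholdIm (3 * ε) (approxQuotient a b c) - conj a * c‖ ≤ 4 * ε := by
  have hε : 0 ≤ ε := (norm_nonneg _).trans hab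
  calc _ ≤ ‖softThresholdIm (3 * ε) (approxQuotient a b c) - approxQuotient a b c‖ +
        ‖approxQuotient a b c - conj a * c‖ := norm_sub_le_norm_sub_add_norm_sub _ _ _
    _ ≤ 3 * ε + ε := by
      rw [norm_approxQuotient_sub ha]
      gcongr
      exact norm_softThresholdIm_sub_self_le (by positivity) _
    _ = 4 * ε := by ring

lemma one_sub_le_norm_softThresholdIm_approxQuotient (ha : ‖a‖ = 1) (hc : ‖c‖ = 1)
    (hab : ‖a - b‖ ≤ ε) : 1 - 4 * ε ≤ ‖softThresholdIm (3 * ε) (approxQuotient a b c)‖ := by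
  have hnear := norm_softThresholdIm_approxQuotient_sub_le (c := c) ha hab
  have hnorm : ‖conj a * c‖ = 1 := by rw [norm_mul, RCLike.norm_conj, ha, hc, one_mul]
  have htri := norm_sub_norm_le (conj a * c) (softThresholdIm (3 * ε) (approxQuotient a b c))
  rw [norm_sub_rev, hnorm] at htri
  linarith

lemma softThresholdIm_approxQuotient_ne_zero (ha : ‖a‖ = 1) (hc : ‖c‖ = 1)
    (hab : ‖a - b‖ ≤ ε) (hε : ε < 1 / 4) :
    softThresholdIm (3 * ε) (approxQuotient a b c) ≠ 0 :=
  norm_pos_iff.1 <| (show 0 < 1 - 4 * ε by linarith).trans_le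
    (one_sub_le_norm_softThresholdIm_approxQuotient ha hc hab)

lemma thresholdedQuotient_eq_one (ha : ‖a‖ = 1) (hcb : ‖c - b‖ ≤ ε) (hε : ε < 1 / 3) :
    thresholdedQuotient ε a b c = 1 := by
  have hε0 : 0 ≤ ε := (norm_nonneg _).trans hcb
  exact normalize_softThresholdIm_eq_one
    ((norm_approxQuotient_sub_one ha).trans_le (by linarith)) (by linarith)

lemma thresholdedQuotient_eq_neg_one (ha : ‖a‖ = 1) (hab : ‖a - b‖ ≤ ε) (hcb : ‖c + b‖ ≤ ε)
    (hε : ε < 1 / 3) : thresholdedQuotient ε a b c = -1 := by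
  have hε0 : 0 ≤ ε := (norm_nonneg _).trans hcb
  have hnear : ‖-approxQuotient a b c - 1‖ ≤ 3 * ε := by
    rw [← neg_add', norm_neg]
    linarith [norm_approxQuotient_add_one_le (b := b) (c := c) ha]
  rw [← normalize_softThresholdIm_eq_one hnear (by linarith), softThresholdIm_neg (by positivity),
    NormedSpace.normalize_neg, neg_neg, thresholdedQuotient]

lemma norm_thresholdedQuotient (ha : ‖a‖ = 1) (hc : ‖c‖ = 1) (hab : ‖a - b‖ ≤ ε)
    (hε : ε < 1 / 4) : ‖thresholdedQuotient ε a b c‖ = 1 :=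
  NormedSpace.norm_normalize (softThresholdIm_approxQuotient_ne_zero ha hc hab hε)

lemma norm_thresholdedQuotient_sub_conj_mul_le (ha : ‖a‖ = 1) (hc : ‖c‖ = 1)
    (hab : ‖a - b‖ ≤ ε) (hε : ε < 1 / 4) :
    ‖thresholdedQuotient ε a b c - conj a * c‖ ≤ 8 * ε := by
  set R := softThresholdIm (3 * ε) (approxQuotient a b c)
  have hnear : ‖R - conj a * c‖ ≤ 4 * ε := norm_softThresholdIm_approxQuotient_sub_le ha hab
  have hproj : ‖NormedSpace.normalize R - R‖ ≤ 4 * ε := by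
    rw [norm_normalize_sub_self (softThresholdIm_approxQuotient_ne_zero ha hc hab hε), abs_sub_comm]
    have hnorm : ‖conj a * c‖ = 1 := by rw [norm_mul, RCLike.norm_conj, ha, hc, one_mul]
    exact hnorm ▸ (abs_norm_sub_norm_le R (conj a * c)).trans hnear
  calc ‖thresholdedQuotient ε a b c - conj a * c‖
      ≤ ‖NormedSpace.normalize R - R‖ + ‖R - conj a * c‖ :=
        norm_sub_le_norm_sub_add_norm_sub _ _ _
    _ ≤ 8 * ε := by linarith

lemma norm_thresholdedQuotient_sub_le {a' b' c' : ℂ} (ha : ‖a‖ = 1) (hc : ‖c‖ = 1)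
    (hab : ‖a - b‖ ≤ ε) (ha' : ‖a'‖ = 1) (hb' : ‖b'‖ = 1) (hc' : ‖c'‖ = 1)
    (hab' : ‖a' - b'‖ ≤ ε) (hε : ε < 1 / 4) :
    ‖thresholdedQuotient ε a b c - thresholdedQuotient ε a' b' c'‖ ≤
      (‖(c - b) - (c' - b')‖ + 2 * ‖a - a'‖) / (1 - 4 * ε) := by
  have hε4 : 0 < 1 - 4 * ε := by linarith
  calc _ ≤ ‖softThresholdIm (3 * ε) (approxQuotient a b c) -
        softThresholdIm (3 * ε) (approxQuotient a' b' c')‖ / (1 - 4 * ε) :=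
        norm_normalize_sub_normalize_le hε4
          (one_sub_le_norm_softThresholdIm_approxQuotient ha hc hab)
          (one_sub_le_norm_softThresholdIm_approxQuotient ha' hc' hab')
    _ ≤ _ := by
      gcongr
      exact (norm_softThresholdIm_sub_le _ _ _).trans (norm_approxQuotient_sub_le ha hb' hc')

lemma norm_thresholdedQuotient_sub_rpow_le {p t : ℝ} {a' b' c' : ℂ} (hp : 0 ≤ p) (ht : 0 < t)
    (ha : ‖a‖ = 1) (hc : ‖c‖ = 1) (hab : ‖a - b‖ ≤ ε) (ha' : ‖a'‖ = 1) (hb' : ‖b'‖ = 1)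
    (hc' : ‖c'‖ = 1) (hab' : ‖a' - b'‖ ≤ ε) (hε : ε ≤ 1 / 8) :
    ‖thresholdedQuotient ε a b c - thresholdedQuotient ε a' b' c'‖ ^ p ≤
      ((1 + t) / (1 - 4 * ε)) ^ p * ‖(c - b) - (c' - b')‖ ^ p +
        ((1 + t⁻¹) * 4) ^ p * ‖a - a'‖ ^ p := by
  have hε4 : 0 < 1 - 4 * ε := by linarith
  have hlip : ‖thresholdedQuotient ε a b c - thresholdedQuotient ε a' b' c'‖ ≤
      ‖(c - b) - (c' - b')‖ / (1 - 4 * ε) + 4 * ‖a - a'‖ := by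
    refine (norm_thresholdedQuotient_sub_le ha hc hab ha' hb' hc' hab' (by linarith)).trans ?_
    rw [add_div]
    gcongr
    rw [div_le_iff₀ hε4]
    nlinarith [norm_nonneg (a - a')]
  rw [← Real.mul_rpow (by positivity) (by positivity),
    ← Real.mul_rpow (by positivity) (by positivity), div_mul_eq_mul_div, mul_div_assoc, mul_assoc]
  exact (Real.rpow_le_rpow (norm_nonneg _) hlip hp).trans
    (add_rpow_le_mul_rpow_add_mul_rpow hp (by positivity) (by positivity) ht)

end Quotient

/-! ### Degree -/

lemma mem_unitCircle {z : ℂ} : z ∈ unitCircle ↔ ‖z‖ = 1 := mem_sphere_zero_iff_norm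

lemma exp_mul_I_mem_unitCircle (θ : ℝ) : Complex.exp (θ * Complex.I) ∈ unitCircle :=
  mem_unitCircle.2 (Complex.norm_exp_ofReal_mul_I θ)

lemma mem_slitPlane_of_norm_eq_one {z : ℂ} (hz : ‖z‖ = 1) (hz' : z ≠ -1) :
    z ∈ Complex.slitPlane := by
  rw [Complex.mem_slitPlane_iff_arg]
  refine ⟨fun harg => hz' ?_, norm_ne_zero_iff.1 (by simp [hz])⟩
  rw [← Complex.norm_mul_exp_arg_mul_I z, hz, harg]
  simp

lemma HasDegree.conj_mul {u v : ℂ → ℂ} {d e : ℤ} (hu : HasDegree u d) (hv : HasDegree v e) :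
    HasDegree (fun z => conj (u z) * v z) (e - d) := by
  obtain ⟨huc, hu1, φ, hφ, hφu, hφd⟩ := hu
  obtain ⟨hvc, hv1, ψ, hψ, hψv, hψd⟩ := hv
  refine ⟨(Complex.continuous_conj.comp_continuousOn huc).mul hvc, fun z hz => ?_,
    fun θ => ψ θ - φ θ, hψ.sub hφ, fun θ hθ => ?_, ?_⟩
  · rw [mem_unitCircle, norm_mul, RCLike.norm_conj, mem_unitCircle.1 (hu1 z hz),
      mem_unitCircle.1 (hv1 z hz), one_mul]
  · simp only [hφu θ hθ, hψv θ hθ, ← Complex.exp_conj, map_mul, Complex.conj_ofReal,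
      Complex.conj_I, ← Complex.exp_add]
    push_cast
    ring_nf
  · push_cast
    linarith

lemma HasDegree.of_ne_neg {f g : ℂ → ℂ} {d : ℤ} (hg : HasDegree g d)
    (hf : ContinuousOn f unitCircle) (hf1 : ∀ z ∈ unitCircle, f z ∈ unitCircle)
    (hne : ∀ z ∈ unitCircle, f z ≠ -g z) : HasDegree f d := by
  obtain ⟨hgc, hg1, φ, hφ, hφg, hφd⟩ := hg
  set h : ℝ → ℂ := fun θ =>
    conj (g (Complex.exp (θ * Complex.I))) * f (Complex.exp (θ * Complex.I)) with hh
  have hgh (θ : ℝ) :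
      g (Complex.exp (θ * Complex.I)) * h θ = f (Complex.exp (θ * Complex.I)) := by
    have := conj_mul_self_of_norm_eq_one (mem_unitCircle.1 (hg1 _ (exp_mul_I_mem_unitCircle θ)))
    linear_combination f (Complex.exp (θ * Complex.I)) * this
  have hnorm (θ : ℝ) : ‖h θ‖ = 1 := by
    have := congrArg norm (hgh θ)
    rwa [norm_mul, mem_unitCircle.1 (hg1 _ (exp_mul_I_mem_unitCircle θ)), one_mul,
      mem_unitCircle.1 (hf1 _ (exp_mul_I_mem_unitCircle θ))] at this
  have hslit (θ : ℝ) : h θ ∈ Complex.slitPlane :=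
    mem_slitPlane_of_norm_eq_one (hnorm θ) fun heq =>
      hne _ (exp_mul_I_mem_unitCircle θ) (by rw [← hgh θ, heq, mul_neg_one])
  have hcont : Continuous h :=
    ((Complex.continuous_conj.comp_continuousOn hgc).mul hf).comp_continuous (by fun_prop)
      exp_mul_I_mem_unitCircle
  have harg : Continuous fun θ => (h θ).arg := Complex.continuousOn_arg.comp_continuous hcont hslit
  refine ⟨hf, hf1, fun θ => φ θ + (h θ).arg, hφ.add harg.continuousOn, fun θ hθ => ?_, ?_⟩
  · have hexp := Complex.norm_mul_exp_arg_mul_I (h θ)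
    rw [hnorm, Complex.ofReal_one, one_mul] at hexp
    rw [← hgh θ, Complex.ofReal_add, add_mul, Complex.exp_add, hexp, hφg θ hθ]
  · have hper : h (2 * Real.pi) = h 0 := by simp [hh]
    simp only [hper]
    linarith

lemma HasDegree.thresholdedQuotient {u w v : ℂ → ℂ} {ε : ℝ} {d e : ℤ} (hu : HasDegree u d)
    (hw : ContinuousOn w unitCircle) (hv : HasDegree v e) (huw : ∀ x ∈ unitCircle, ‖u x - w x‖ ≤ ε)
    (hε : ε < 1 / 4) : HasDegree (fun x => thresholdedQuotient ε (u x) (w x) (v x)) (e - d) := by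
  have hu1 x (hx : x ∈ unitCircle) : ‖u x‖ = 1 := mem_unitCircle.1 (hu.2.1 x hx)
  have hv1 x (hx : x ∈ unitCircle) : ‖v x‖ = 1 := mem_unitCircle.1 (hv.2.1 x hx)
  refine (hu.conj_mul hv).of_ne_neg ?_ (fun x hx => ?_) (fun x hx hanti => ?_)
  · have hR : ContinuousOn
        (fun x => softThresholdIm (3 * ε) (approxQuotient (u x) (w x) (v x))) unitCircle :=
      (continuous_softThresholdIm _).comp_continuousOn <|
        ((Complex.continuous_conj.comp_continuousOn hu.1).mul (hv.1.sub hw)).add continuousOn_const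
    exact (hR.norm.inv₀ fun x hx => norm_ne_zero_iff.2 <|
      softThresholdIm_approxQuotient_ne_zero (hu1 x hx) (hv1 x hx) (huw x hx) hε).smul hR
  · exact mem_unitCircle.2 (norm_thresholdedQuotient (hu1 x hx) (hv1 x hx) (huw x hx) hε)
  · have hclose := norm_thresholdedQuotient_sub_conj_mul_le (hu1 x hx) (hv1 x hx) (huw x hx) hε
    rw [hanti, ← neg_add', norm_neg, ← two_mul, norm_mul, norm_mul, RCLike.norm_conj, hu1 x hx,
      hv1 x hx, Complex.norm_two] at hclose
    linarith

/-! ### The Gagliardo energy -/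

instance isFiniteMeasure_circleMeasure : IsFiniteMeasure circleMeasure := by
  unfold circleMeasure; infer_instance

lemma measurableSet_unitCircle : MeasurableSet unitCircle :=
  Metric.isClosed_sphere.measurableSet

lemma ae_mem_unitCircle : ∀ᵐ x ∂circleMeasure, x ∈ unitCircle :=
  (ae_map_iff (by fun_prop) measurableSet_unitCircle).2 (.of_forall exp_mul_I_mem_unitCircle)

lemma aemeasurable_circleMeasure_of_continuousOn {f : ℂ → ℂ} (hf : ContinuousOn f unitCircle) :
    AEMeasurable f circleMeasure := by
  have := hf.aemeasurable (μ := circleMeasure) measurableSet_unitCircle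
  rwa [Measure.restrict_eq_self_of_ae_mem ae_mem_unitCircle] at this

lemma gEnergyOn_mono (p : ℝ) (f : ℂ → ℂ) {A B : Set (ℂ × ℂ)} (hAB : A ⊆ B) :
    gEnergyOn p f A ≤ gEnergyOn p f B :=
  lintegral_mono_set hAB

lemma gEnergyOn_union_le (p : ℝ) (f : ℂ → ℂ) (A B : Set (ℂ × ℂ)) :
    gEnergyOn p f (A ∪ B) ≤ gEnergyOn p f A + gEnergyOn p f B :=
  lintegral_union_le _ A B

lemma gEnergyOn_inter_add_sdiff (p : ℝ) (f : ℂ → ℂ) (A : Set (ℂ × ℂ)) {B : Set (ℂ × ℂ)}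
    (hB : MeasurableSet B) : gEnergyOn p f (A ∩ B) + gEnergyOn p f (A \ B) = gEnergyOn p f A :=
  lintegral_inter_add_sdiff _ A hB

lemma gEnergyOn_prod_swap (p : ℝ) (f : ℂ → ℂ) (A B : Set ℂ) :
    gEnergyOn p f (A ×ˢ B) = gEnergyOn p f (B ×ˢ A) := by
  simp only [gEnergyOn, ← Measure.prod_restrict]
  rw [← lintegral_prod_swap]
  simp only [Prod.fst_swap, Prod.snd_swap, norm_sub_rev]

lemma gEnergyOn_unitCircle_prod (p : ℝ) (f : ℂ → ℂ) :
    gEnergyOn p f (unitCircle ×ˢ unitCircle) = gEnergy p f := by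
  rw [gEnergy, gEnergyOn, gEnergyOn, ← Measure.prod_restrict,
    Measure.restrict_eq_self_of_ae_mem ae_mem_unitCircle, Measure.restrict_univ]

lemma gEnergyOn_eq_zero {p : ℝ} (hp : p ≠ 0) {f : ℂ → ℂ} {A : Set (ℂ × ℂ)}
    (hA : MeasurableSet A) (hf : ∀ q ∈ A, f q.1 = f q.2) : gEnergyOn p f A = 0 :=
  setLIntegral_eq_zero hA fun q hq => by simp [hf q hq, Real.zero_rpow hp]

lemma gEnergyOn_le_ofReal_mul {p a : ℝ} {f g : ℂ → ℂ} {A : Set (ℂ × ℂ)} (hA : MeasurableSet A)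
    (ha : 0 ≤ a) (h : ∀ q ∈ A, ‖f q.1 - f q.2‖ ^ p ≤ a * ‖g q.1 - g q.2‖ ^ p) :
    gEnergyOn p f A ≤ ENNReal.ofReal a * gEnergyOn p g A := by
  rw [gEnergyOn, gEnergyOn, ← lintegral_const_mul' _ _ ENNReal.ofReal_ne_top]
  refine setLIntegral_mono' hA fun q hq => ?_
  rw [← ENNReal.ofReal_mul ha, ← mul_div_assoc]
  gcongr
  exact h q hq

lemma gEnergyOn_le_ofReal_mul_add_ofReal_mul {p a b : ℝ} {f g h : ℂ → ℂ} {A : Set (ℂ × ℂ)}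
    (hg : AEMeasurable g circleMeasure) (hA : MeasurableSet A) (ha : 0 ≤ a) (hb : 0 ≤ b)
    (hf : ∀ q ∈ A,
      ‖f q.1 - f q.2‖ ^ p ≤ a * ‖g q.1 - g q.2‖ ^ p + b * ‖h q.1 - h q.2‖ ^ p) :
    gEnergyOn p f A ≤
      ENNReal.ofReal a * gEnergyOn p g A + ENNReal.ofReal b * gEnergyOn p h A := by
  have hg₁ : AEMeasurable (fun q : ℂ × ℂ => g q.1) (circleMeasure.prod circleMeasure) :=
    hg.comp_quasiMeasurePreserving Measure.quasiMeasurePreserving_fst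
  have hg₂ : AEMeasurable (fun q : ℂ × ℂ => g q.2) (circleMeasure.prod circleMeasure) :=
    hg.comp_quasiMeasurePreserving Measure.quasiMeasurePreserving_snd
  have hint : AEMeasurable
      (fun q : ℂ × ℂ => ENNReal.ofReal (‖g q.1 - g q.2‖ ^ p / ‖q.1 - q.2‖ ^ 2))
      ((circleMeasure.prod circleMeasure).restrict A) :=
    (((hg₁.sub hg₂).norm.pow_const p).div (by fun_prop)).ennreal_ofReal.restrict
  simp only [gEnergyOn]
  rw [← lintegral_const_mul' _ _ ENNReal.ofReal_ne_top,
    ← lintegral_const_mul' _ _ ENNReal.ofReal_ne_top, ← lintegral_add_left' (hint.const_mul _)]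
  refine setLIntegral_mono' hA fun q hq => ?_
  rw [← ENNReal.ofReal_mul ha, ← ENNReal.ofReal_mul hb,
    ← ENNReal.ofReal_add (by positivity) (by positivity), ← mul_div_assoc, ← mul_div_assoc,
    ← add_div]
  gcongr
  exact hf q hq

lemma gEnergyOn_prod_self_sdiff_le (p : ℝ) (f : ℂ → ℂ) (S C : Set ℂ) :
    gEnergyOn p f ((S ×ˢ S) \ (C ×ˢ C)) ≤ 2 * gEnergyOn p f ((S \ C) ×ˢ S) := by
  have hsub : (S ×ˢ S) \ (C ×ˢ C) ⊆ (S \ C) ×ˢ S ∪ S ×ˢ (S \ C) := by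
    rintro ⟨x, y⟩ ⟨⟨hx, hy⟩, hxy⟩
    by_cases hxC : x ∈ C
    exacts [Or.inr ⟨hx, hy, fun hyC => hxy ⟨hxC, hyC⟩⟩, Or.inl ⟨⟨hx, hxC⟩, hy⟩]
  refine ((gEnergyOn_mono p f hsub).trans (gEnergyOn_union_le ..)).trans_eq ?_
  rw [gEnergyOn_prod_swap p f S, two_mul]

lemma gEnergyOn_sdiff_eq_gEnergy {p : ℝ} (hp : p ≠ 0) {f : ℂ → ℂ} {A : Set (ℂ × ℂ)}
    (hA : MeasurableSet A) (hf : ∀ q ∈ A, f q.1 = f q.2) :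
    gEnergyOn p f ((unitCircle ×ˢ unitCircle) \ A) = gEnergy p f := by
  have hzero : gEnergyOn p f ((unitCircle ×ˢ unitCircle) ∩ A) = 0 :=
    gEnergyOn_eq_zero hp ((measurableSet_unitCircle.prod measurableSet_unitCircle).inter hA)
      fun q hq => hf q hq.2
  rw [← gEnergyOn_unitCircle_prod, ← gEnergyOn_inter_add_sdiff p f (unitCircle ×ˢ unitCircle) hA,
    hzero, zero_add]

lemma gEnergy_le_of_eq_on {p a b : ℝ} (hp : p ≠ 0) (ha : 0 ≤ a) (hb : 0 ≤ b) {f g h : ℂ → ℂ}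
    {P M : Set ℂ} (hP : MeasurableSet P) (hM : MeasurableSet M)
    (hg : AEMeasurable g circleMeasure)
    (hfP : ∀ x ∈ P, ∀ y ∈ P, f x = f y) (hfM : ∀ x ∈ M, ∀ y ∈ M, f x = f y)
    (hPM : ∀ x ∈ P, ∀ y ∈ M, ‖f x - f y‖ ^ p ≤ a * ‖g x - g y‖ ^ p)
    (hf : ∀ x ∈ unitCircle, ∀ y ∈ unitCircle,
      ‖f x - f y‖ ^ p ≤ a * ‖g x - g y‖ ^ p + b * ‖h x - h y‖ ^ p) :
    gEnergy p f ≤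
      ENNReal.ofReal a * gEnergyOn p g ((unitCircle ×ˢ unitCircle) \ (P ×ˢ P ∪ M ×ˢ M)) +
        ENNReal.ofReal (2 * b) * gEnergyOn p h ((unitCircle \ (P ∪ M)) ×ˢ unitCircle) := by
  set Q := (P ∪ M) ×ˢ (P ∪ M)
  set D := (unitCircle ×ˢ unitCircle) \ (P ×ˢ P ∪ M ×ˢ M)
  have hQ : MeasurableSet Q := (hP.union hM).prod (hP.union hM)
  have hPPMM : MeasurableSet (P ×ˢ P ∪ M ×ˢ M) := (hP.prod hP).union (hM.prod hM)
  have hDm : MeasurableSet D := (measurableSet_unitCircle.prod measurableSet_unitCircle).diff hPPMM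
  have hconst q (hq : q ∈ P ×ˢ P ∪ M ×ˢ M) : f q.1 = f q.2 :=
    hq.elim (fun h => hfP _ h.1 _ h.2) (fun h => hfM _ h.1 _ h.2)
  have hinner : gEnergyOn p f (D ∩ Q) ≤ ENNReal.ofReal a * gEnergyOn p g (D ∩ Q) := by
    refine gEnergyOn_le_ofReal_mul (hDm.inter hQ) ha ?_
    rintro ⟨x, y⟩ ⟨⟨-, hxy⟩, hx | hx, hy | hy⟩
    · exact absurd (Or.inl ⟨hx, hy⟩) hxy
    · exact hPM x hx y hy
    · simpa only [norm_sub_rev] using hPM y hy x hx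
    · exact absurd (Or.inr ⟨hx, hy⟩) hxy
  have houter : gEnergyOn p f (D \ Q) ≤
      ENNReal.ofReal a * gEnergyOn p g (D \ Q) + ENNReal.ofReal b * gEnergyOn p h (D \ Q) :=
    gEnergyOn_le_ofReal_mul_add_ofReal_mul hg (hDm.diff hQ) ha hb
      fun q hq => hf _ hq.1.1.1 _ hq.1.1.2
  have hcross : gEnergyOn p h (D \ Q) ≤ 2 * gEnergyOn p h ((unitCircle \ (P ∪ M)) ×ˢ unitCircle) :=
    (gEnergyOn_mono p h (Set.sdiff_subset_sdiff_left Set.sdiff_subset)).trans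
      (gEnergyOn_prod_self_sdiff_le p h unitCircle (P ∪ M))
  calc gEnergy p f
      = gEnergyOn p f (D ∩ Q) + gEnergyOn p f (D \ Q) := by
        rw [gEnergyOn_inter_add_sdiff p f D hQ, gEnergyOn_sdiff_eq_gEnergy hp hPPMM hconst]
    _ ≤ ENNReal.ofReal a * (gEnergyOn p g (D ∩ Q) + gEnergyOn p g (D \ Q)) +
        ENNReal.ofReal b * (2 * gEnergyOn p h ((unitCircle \ (P ∪ M)) ×ˢ unitCircle)) := by
      rw [mul_add, add_assoc]
      gcongr
      exact houter.trans (by gcongr)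
    _ = _ := by
      rw [gEnergyOn_inter_add_sdiff p g D hQ, mul_comm 2 b, ENNReal.ofReal_mul hb, mul_assoc,
        ENNReal.ofReal_ofNat]

/-! ### The minimal seminorm of a given degree -/

lemma gSeminorm_nonneg (p : ℝ) (f : ℂ → ℂ) : 0 ≤ gSeminorm p f := by
  unfold gSeminorm; positivity

lemma gSeminorm_rpow {p : ℝ} (hp : p ≠ 0) (f : ℂ → ℂ) :
    gSeminorm p f ^ p = (gEnergy p f).toReal := by
  rw [gSeminorm, one_div, Real.rpow_inv_rpow ENNReal.toReal_nonneg hp]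

lemma sigmaP_nonneg (p : ℝ) (d : ℤ) : 0 ≤ sigmaP p d :=
  Real.sInf_nonneg (Set.forall_mem_image.2 fun f _ => gSeminorm_nonneg p f)

lemma sigmaP_le_gSeminorm {p : ℝ} {d : ℤ} {f : ℂ → ℂ} (hf : f ∈ classE p d) :
    sigmaP p d ≤ gSeminorm p f :=
  csInf_le ⟨0, Set.forall_mem_image.2 fun g _ => gSeminorm_nonneg p g⟩ ⟨f, hf, rfl⟩

lemma HasDegree.mem_classE {p : ℝ} (hp : p ≠ 0) {d : ℤ} {f : ℂ → ℂ} (hf : HasDegree f d)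
    (hfin : gEnergy p f ≠ ⊤) : f ∈ classE p d := by
  refine ⟨aemeasurable_circleMeasure_of_continuousOn hf.1, ?_, hfin, fun _ => f,
    fun _ => ⟨hf, hfin⟩, ?_, ?_⟩
  · filter_upwards [ae_mem_unitCircle] with x hx using mem_unitCircle.1 (hf.2.1 x hx)
  · simp [Real.zero_rpow hp]
  · simp [gSeminorm, gEnergy, gEnergyOn, Real.zero_rpow hp, Real.zero_rpow (inv_ne_zero hp)]

lemma HasDegree.ofReal_sigmaP_rpow_le_gEnergy {p : ℝ} (hp : 0 < p) {d : ℤ} {f : ℂ → ℂ}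
    (hf : HasDegree f d) : ENNReal.ofReal (sigmaP p d ^ p) ≤ gEnergy p f := by
  by_cases hfin : gEnergy p f = ⊤
  · exact hfin ▸ le_top
  refine ENNReal.ofReal_le_of_le_toReal ?_
  rw [← gSeminorm_rpow hp.ne']
  exact Real.rpow_le_rpow (sigmaP_nonneg p d) (sigmaP_le_gSeminorm (hf.mem_classE hp.ne' hfin))
    hp.le

/-! ### The contact sets -/

lemma isClosed_arcIcc (a b : ℝ) : IsClosed (arcIcc a b) :=
  (isCompact_Icc.image (by fun_prop)).isClosed

lemma norm_sub_exp_le_of_mem_arcIcc {z : ℂ} {θ ε : ℝ} (hz : z ∈ arcIcc (θ - ε) (θ + ε)) :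
    ‖z - Complex.exp (θ * Complex.I)‖ ≤ ε := by
  obtain ⟨τ, hτ, rfl⟩ := hz
  have hfactor : Complex.exp (τ * Complex.I) - Complex.exp (θ * Complex.I) =
      Complex.exp (θ * Complex.I) * (Complex.exp (Complex.I * (τ - θ : ℝ)) - 1) := by
    rw [mul_sub_one, ← Complex.exp_add]; push_cast; ring_nf
  simp only
  rw [hfactor, norm_mul, Complex.norm_exp_ofReal_mul_I, one_mul]
  exact Real.norm_exp_I_mul_ofReal_sub_one_le.trans
    (abs_le.2 ⟨by linarith [hτ.1], by linarith [hτ.2]⟩)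

lemma norm_sub_mul_of_norm_eq_one {a b : ℂ} (hb : ‖b‖ = 1) (z : ℂ) :
    ‖a - z * b‖ = ‖a * conj b - z‖ := by
  have hfactor : a - z * b = (a * conj b - z) * b := by
    linear_combination -a * conj_mul_self_of_norm_eq_one hb
  rw [hfactor, norm_mul, hb, mul_one]

section ContactSets

variable {w v : ℂ → ℂ} {ε : ℝ} {x : ℂ}

lemma measurableSet_Cplus (hw : ContinuousOn w unitCircle) (hv : ContinuousOn v unitCircle) :
    MeasurableSet (Cplus w v ε) :=
  ((hv.mul (Complex.continuous_conj.comp_continuousOn hw)).preimage_isClosed_of_isClosed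
    Metric.isClosed_sphere (isClosed_arcIcc _ _)).measurableSet

lemma measurableSet_Cminus (hw : ContinuousOn w unitCircle) (hv : ContinuousOn v unitCircle) :
    MeasurableSet (Cminus w v ε) :=
  ((hv.mul (Complex.continuous_conj.comp_continuousOn hw)).preimage_isClosed_of_isClosed
    Metric.isClosed_sphere (isClosed_arcIcc _ _)).measurableSet

lemma norm_sub_le_of_mem_Cplus (hx : x ∈ Cplus w v ε) (hw : ‖w x‖ = 1) : ‖v x - w x‖ ≤ ε := by
  have harc : v x * conj (w x) ∈ arcIcc (0 - ε) (0 + ε) := by simpa using hx.2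
  simpa [← norm_sub_mul_of_norm_eq_one hw] using norm_sub_exp_le_of_mem_arcIcc harc

lemma norm_add_le_of_mem_Cminus (hx : x ∈ Cminus w v ε) (hw : ‖w x‖ = 1) : ‖v x + w x‖ ≤ ε := by
  have hsub : v x + w x = v x - (-1) * w x := by ring
  rw [hsub, norm_sub_mul_of_norm_eq_one hw]
  simpa only [Complex.exp_pi_mul_I] using norm_sub_exp_le_of_mem_arcIcc hx.2

lemma two_sub_le_norm_sub_of_mem_Cplus_of_mem_Cminus {y : ℂ} (hx : x ∈ Cplus w v ε)
    (hy : y ∈ Cminus w v ε) (hwx : ‖w x‖ = 1) (hwy : ‖w y‖ = 1) :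
    2 - 2 * ε ≤ ‖(v x - w x) - (v y - w y)‖ := by
  have hsplit : 2 * w y = ((v x - w x) - (v y - w y)) - (v x - w x) + (v y + w y) := by ring
  have htri : ‖2 * w y‖ ≤ ‖(v x - w x) - (v y - w y)‖ + ‖v x - w x‖ + ‖v y + w y‖ :=
    hsplit ▸ (norm_add_le _ _).trans (by gcongr; exact norm_sub_le _ _)
  rw [norm_mul, Complex.norm_two, hwy] at htri
  linarith [norm_sub_le_of_mem_Cplus hx hwx, norm_add_le_of_mem_Cminus hy hwy]

end ContactSets

/-! ### The energy estimate -/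

lemma gEnergy_thresholdedQuotient_le {p ε t : ℝ} {u w v : ℂ → ℂ} (hp : 0 < p) (ht : 0 < t)
    (hε : ε ≤ 1 / 8) (hwc : ContinuousOn w unitCircle) (hvc : ContinuousOn v unitCircle)
    (hu1 : ∀ x ∈ unitCircle, ‖u x‖ = 1) (hw1 : ∀ x ∈ unitCircle, ‖w x‖ = 1)
    (hv1 : ∀ x ∈ unitCircle, ‖v x‖ = 1) (huw : ∀ x ∈ unitCircle, ‖u x - w x‖ ≤ ε) :
    gEnergy p (fun x => thresholdedQuotient ε (u x) (w x) (v x)) ≤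
      ENNReal.ofReal (((1 + t) / (1 - 4 * ε)) ^ p) *
          gEnergyOn p (fun x => v x - w x) ((unitCircle ×ˢ unitCircle) \
            ((Cplus w v ε ×ˢ Cplus w v ε) ∪ (Cminus w v ε ×ˢ Cminus w v ε))) +
        ENNReal.ofReal (2 * ((1 + t⁻¹) * 4) ^ p) *
          gEnergyOn p u ((unitCircle \ (Cplus w v ε ∪ Cminus w v ε)) ×ˢ unitCircle) := by
  have hε4 : 0 < 1 - 4 * ε := by linarith
  have hplus x (hx : x ∈ Cplus w v ε) : thresholdedQuotient ε (u x) (w x) (v x) = 1 :=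
    thresholdedQuotient_eq_one (hu1 x hx.1) (norm_sub_le_of_mem_Cplus hx (hw1 x hx.1)) (by linarith)
  have hminus x (hx : x ∈ Cminus w v ε) : thresholdedQuotient ε (u x) (w x) (v x) = -1 :=
    thresholdedQuotient_eq_neg_one (hu1 x hx.1) (huw x hx.1)
      (norm_add_le_of_mem_Cminus hx (hw1 x hx.1)) (by linarith)
  refine gEnergy_le_of_eq_on hp.ne' (by positivity) (by positivity) (measurableSet_Cplus hwc hvc)
    (measurableSet_Cminus hwc hvc) (aemeasurable_circleMeasure_of_continuousOn (hvc.sub hwc))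
    (fun x hx y hy => (hplus x hx).trans (hplus y hy).symm)
    (fun x hx y hy => (hminus x hx).trans (hminus y hy).symm) (fun x hx y hy => ?_)
    fun x hx y hy => norm_thresholdedQuotient_sub_rpow_le hp.le ht (hu1 x hx) (hv1 x hx)
      (huw x hx) (hu1 y hy) (hw1 y hy) (hv1 y hy) (huw y hy) hε
  have hε0 : 0 ≤ ε := (norm_nonneg _).trans (huw x hx.1)
  have hjump := two_sub_le_norm_sub_of_mem_Cplus_of_mem_Cminus hx hy (hw1 x hx.1) (hw1 y hy.1)
  rw [hplus x hx, hminus y hy, ← Real.mul_rpow (by positivity) (by positivity)]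
  refine Real.rpow_le_rpow (norm_nonneg _) ?_ hp.le
  rw [show ‖(1 : ℂ) - -1‖ = 2 by norm_num, div_mul_eq_mul_div, le_div_iff₀ hε4]
  nlinarith

theorem key_lemma_general {p : ℝ} (hp : 1 < p) {u utilde v : ℂ → ℂ} {ε : ℝ} {d1 d2 : ℤ}
    (hutilde : ContinuousOn utilde unitCircle) (hutilde1 : ∀ z ∈ unitCircle, utilde z ∈ unitCircle)
    (hε0 : 0 < ε) (hε : ε ≤ 1 / 25) (hclose : ∀ x ∈ unitCircle, ‖u x - utilde x‖ ≤ ε)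
    (hu : HasDegree u d1) (hv : HasDegree v d2) :
    ENNReal.ofReal ((1 - (5 * p + 2 * 8 ^ p) * ε ^ ((1 : ℝ) / 2)) * sigmaP p (d2 - d1) ^ p) ≤
      gEnergyOn p (fun x => v x - utilde x)
          ((unitCircle ×ˢ unitCircle) \
            ((Cplus utilde v ε ×ˢ Cplus utilde v ε) ∪
              (Cminus utilde v ε ×ˢ Cminus utilde v ε))) +
        ENNReal.ofReal ((5 * p + 2 * 8 ^ p) * ε ^ (-(p / 2))) *
          gEnergyOn p u
            ((unitCircle \ (Cplus utilde v ε ∪ Cminus utilde v ε)) ×ˢ unitCircle) := by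
  set c := 5 * p + 2 * 8 ^ p
  set s := ε ^ ((1 : ℝ) / 2) with hs
  have hs0 : 0 < s := by positivity
  have hs2 : s ^ 2 = ε := by rw [hs, ← Real.sqrt_eq_rpow, Real.sq_sqrt hε0.le]
  have hden : 0 < 1 - 4 * ε := by linarith
  have h8 : (0 : ℝ) < 8 ^ p := by positivity
  have hA : (1 - c * s) * ((1 + s) / (1 - 4 * ε)) ^ p ≤ 1 :=
    hs2 ▸ one_sub_mul_mul_div_rpow_le_one hp.le (by linarith) hs0.le (by nlinarith)
  have hB : (1 - c * s) * (2 * ((1 + s⁻¹) * 4) ^ p) ≤ c * ε ^ (-(p / 2)) := calc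
    _ ≤ 2 * ((1 + s⁻¹) * 4) ^ p := mul_le_of_le_one_left (by positivity) (by nlinarith)
    _ ≤ 2 * (8 ^ p * ε ^ (-(p / 2))) := by
      gcongr
      exact one_add_inv_mul_four_rpow_le (by linarith) hε0 (by linarith)
    _ ≤ c * ε ^ (-(p / 2)) := by
      rw [← mul_assoc]
      gcongr
      linarith
  rw [ENNReal.ofReal_mul' (Real.rpow_nonneg (sigmaP_nonneg p _) p)]
  refine ofReal_mul_le_add_ofReal_mul (by positivity) (by positivity) hA hB ?_
  calc ENNReal.ofReal (sigmaP p (d2 - d1) ^ p)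
      ≤ gEnergy p fun x => thresholdedQuotient ε (u x) (utilde x) (v x) :=
        (hu.thresholdedQuotient hutilde hv hclose
          (by linarith)).ofReal_sigmaP_rpow_le_gEnergy (by linarith)
    _ ≤ _ := gEnergy_thresholdedQuotient_le (by linarith) hs0 (by linarith) hutilde hv.1
      (fun x hx => mem_unitCircle.1 (hu.2.1 x hx)) (fun x hx => mem_unitCircle.1 (hutilde1 x hx))
      (fun x hx => mem_unitCircle.1 (hv.2.1 x hx)) hclose

/-- **Lemma 3.1 (key lemma).** For every `p ∈ (1,∞)` there are `c₁ = c₁(p) > 0` and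
`ε₀ = ε₀(p) > 0` such that for all continuous circle maps `u, ũ, v ∈ W^{1/p,p}(S¹;S¹)`,
every `ε ∈ (0, π/20)` with `ε ≤ ε₀` and `|u - ũ| ≤ ε` on `S¹`, `deg u = d₁`,
`deg v = d₂`, setting `C_ε = C_ε⁺ ∪ C_ε⁻` and
`D_ε = S¹×S¹ \ ((C_ε⁺ × C_ε⁺) ∪ (C_ε⁻ × C_ε⁻))`, one has
`E_p(v - ũ; D_ε) ≥ (1 - c₁ ε^{1/2}) σ_p^p(d₂-d₁) - c₁ ε^{-p/2} E_p(u; (S¹ \ C_ε) × S¹)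
 - c₁ ε^{p/2} E_p(u; S¹ × S¹)`. -/
theorem key_lemma (p : ℝ) (hp : 1 < p) :
    ∃ c1 ε0 : ℝ, 0 < c1 ∧ 0 < ε0 ∧
      ∀ (u utilde v : ℂ → ℂ) (ε : ℝ) (d1 d2 : ℤ),
        ContinuousOn u unitCircle → ContinuousOn utilde unitCircle →
        ContinuousOn v unitCircle →
        (∀ z ∈ unitCircle, u z ∈ unitCircle) →
        (∀ z ∈ unitCircle, utilde z ∈ unitCircle) →
        (∀ z ∈ unitCircle, v z ∈ unitCircle) →
        gEnergy p u ≠ ⊤ → gEnergy p utilde ≠ ⊤ → gEnergy p v ≠ ⊤ →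
        0 < ε → ε < Real.pi / 20 → ε ≤ ε0 →
        (∀ x ∈ unitCircle, ‖u x - utilde x‖ ≤ ε) →
        HasDegree u d1 → HasDegree v d2 →
        ENNReal.ofReal ((1 - c1 * ε ^ ((1 : ℝ) / 2)) * sigmaP p (d2 - d1) ^ p
            - c1 * ε ^ (-(p / 2)) *
              (gEnergyOn p u
                ((unitCircle \ (Cplus utilde v ε ∪ Cminus utilde v ε)) ×ˢ unitCircle)).toReal
            - c1 * ε ^ (p / 2) * (gEnergyOn p u (unitCircle ×ˢ unitCircle)).toReal) ≤
          gEnergyOn p (fun x => v x - utilde x)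
            ((unitCircle ×ˢ unitCircle) \
              ((Cplus utilde v ε ×ˢ Cplus utilde v ε) ∪
                (Cminus utilde v ε ×ˢ Cminus utilde v ε))) := by
  refine ⟨5 * p + 2 * 8 ^ p, 1 / 25, by positivity, by norm_num,
    fun u utilde v ε d1 d2 _ hutilde _ _ hutilde1 _ hEu _ _ hε0 _ hε hclose hu hv => ?_⟩
  exact ofReal_sub_mul_toReal_sub_le (by positivity) (by positivity)
    (ne_top_of_le_ne_top hEu (gEnergyOn_mono p u (Set.subset_univ _)))
    (key_lemma_general hp hutilde hutilde1 hε0 hε hclose hu hv)
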